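/- Let x, y be probability vectors of dimension d, sorted in nonincreasing order, with strictly positive entries. Then there exists a probability vector c with strictly positive entries such that P(x⊗c → y⊗c) > P(x → y), if and only if P(x → y) < min{x_{d−1}/y_{d−1}, 1}, where x_{d−1} and y_{d−1} are the smallest entries of x and y. -/

import Mathlib

/-- The sum of the `k` largest entries of a vector (equivalently, for vectors with
nonnegative entries, the maximum of `∑ i ∈ s, x i` over subsets `s` of cardinality at
most `k`; this also accounts for padding with zeros). -/
noncomputable def topSum {ι : Type*} [Fintype ι] [DecidableEq ι] (x : ι → ℝ) (k : ℕ) : ℝ :=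
  ((Finset.univ : Finset ι).powerset.filter (fun s => s.card ≤ k)).sup'
    ⟨∅, by simp⟩ (fun s => ∑ i ∈ s, x i)

/-- A probability vector: nonnegative entries summing to 1. -/
def IsProbVec {ι : Type*} [Fintype ι] (x : ι → ℝ) : Prop :=
  (∀ i, 0 ≤ x i) ∧ ∑ i, x i = 1

/-- `x ≺ y` (majorization, after padding with zeros to a common dimension): every partial
sum of the `k` largest entries of `x` is at most that of `y`, with equal total sums. -/
def PMaj {ι κ : Type*} [Fintype ι] [DecidableEq ι] [Fintype κ] [DecidableEq κ]
    (x : ι → ℝ) (y : κ → ℝ) : Prop :=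
  (∀ k : ℕ, topSum x k ≤ topSum y k) ∧ (∑ i, x i = ∑ j, y j)

/-- Tensor product of two vectors: `(x ⊗ y)_{(i,j)} = x_i y_j`. -/
def pvTensor {ι κ : Type*} (x : ι → ℝ) (y : κ → ℝ) : ι × κ → ℝ :=
  fun p => x p.1 * y p.2

/-- The optimal conversion probability
`P(v → w) = min_{0 ≤ n ≤ D-1} (∑_{i=n}^{D-1} v↓_i) / (∑_{i=n}^{D-1} w↓_i)`,
where the tail sum of the `D - n` smallest entries is the total sum minus the sum of the
`n` largest entries. -/
noncomputable def Pconv {ι : Type*} [Fintype ι] [DecidableEq ι] [Nonempty ι]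
    (v w : ι → ℝ) : ℝ :=
  (Finset.range (Fintype.card ι)).inf' (Finset.nonempty_range_iff.mpr Fintype.card_ne_zero)
    (fun n => (∑ i, v i - topSum v n) / (∑ i, w i - topSum w n))

section TopSum

variable {ι : Type*} [Fintype ι] [DecidableEq ι]

theorem sum_le_topSum (x : ι → ℝ) {s : Finset ι} {n : ℕ} (hs : s.card ≤ n) :
    ∑ i ∈ s, x i ≤ topSum x n :=
  Finset.le_sup' (fun s => ∑ i ∈ s, x i) (by simpa using hs)

theorem exists_topSum_eq_sum (x : ι → ℝ) (n : ℕ) :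
    ∃ s : Finset ι, s.card ≤ n ∧ topSum x n = ∑ i ∈ s, x i := by
  obtain ⟨s, hs, h⟩ := Finset.exists_mem_eq_sup'
    (s := (Finset.univ : Finset ι).powerset.filter (fun s => s.card ≤ n))
    ⟨∅, by simp⟩ (fun s => ∑ i ∈ s, x i)
  exact ⟨s, by simpa using hs, h⟩

theorem tail_le_sum (x : ι → ℝ) {u : Finset ι} {n : ℕ} (hu : Fintype.card ι ≤ u.card + n) :
    ∑ i, x i - topSum x n ≤ ∑ i ∈ u, x i := by
  have h : uᶜ.card ≤ n := by
    rw [Finset.card_compl]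
    omega
  have := sum_le_topSum x h
  have := Finset.sum_add_sum_compl u x
  linarith

/-- The sum of the entries outside the `n` largest ones is attained on a set of the
complementary cardinality. -/
theorem exists_tail_eq_sum (x : ι → ℝ) (hx : ∀ i, 0 ≤ x i) {n : ℕ} (hn : n ≤ Fintype.card ι) :
    ∃ u : Finset ι, u.card + n = Fintype.card ι ∧ ∑ i, x i - topSum x n = ∑ i ∈ u, x i := by
  obtain ⟨s, hs, h⟩ := exists_topSum_eq_sum x n
  have hc := Finset.card_add_card_compl s
  obtain ⟨u, hus, hu⟩ := Finset.exists_subset_card_eq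
    (show Fintype.card ι - n ≤ sᶜ.card by omega)
  have hcard : u.card + n = Fintype.card ι := by omega
  refine ⟨u, hcard, le_antisymm (tail_le_sum x hcard.ge) ?_⟩
  have := Finset.sum_le_sum_of_subset_of_nonneg hus (fun i _ _ => hx i)
  have := Finset.sum_add_sum_compl s x
  linarith

theorem tail_pos (x : ι → ℝ) (hx : ∀ i, 0 < x i) {n : ℕ} (hn : n < Fintype.card ι) :
    0 < ∑ i, x i - topSum x n := by
  obtain ⟨u, hu, h⟩ := exists_tail_eq_sum x (fun i => (hx i).le) hn.le
  rw [h]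
  exact Finset.sum_pos (fun i _ => hx i) (Finset.card_pos.mp (by omega))

/-- On a set attaining the tail sum, every entry is at most every entry outside of it. -/
theorem le_of_sum_le_tail (x : ι → ℝ) {u : Finset ι} {n : ℕ}
    (hu : Fintype.card ι ≤ u.card + n) (h : ∑ i ∈ u, x i ≤ ∑ i, x i - topSum x n)
    {p q : ι} (hp : p ∈ u) (hq : q ∉ u) : x p ≤ x q := by
  have hq' : q ∉ u.erase p := fun h => hq (Finset.mem_of_mem_erase h)
  have hcard : (insert q (u.erase p)).card = u.card := by
    rw [Finset.card_insert_of_notMem hq', Finset.card_erase_add_one hp]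
  have := tail_le_sum x (u := insert q (u.erase p)) (n := n) (by omega)
  rw [Finset.sum_insert hq'] at this
  have := Finset.add_sum_erase u x hp
  linarith

variable [Nonempty ι]

theorem Pconv_le (v w : ι → ℝ) {n : ℕ} (hn : n < Fintype.card ι) :
    Pconv v w ≤ (∑ i, v i - topSum v n) / (∑ i, w i - topSum w n) :=
  Finset.inf'_le (fun n => (∑ i, v i - topSum v n) / (∑ i, w i - topSum w n))
    (Finset.mem_range.mpr hn)

theorem lt_Pconv_iff (v w : ι → ℝ) {a : ℝ} :
    a < Pconv v w ↔ ∀ n < Fintype.card ι,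
      a < (∑ i, v i - topSum v n) / (∑ i, w i - topSum w n) := by
  simp [Pconv, Finset.lt_inf'_iff]

theorem Pconv_pos (v w : ι → ℝ) (hv : ∀ i, 0 < v i) (hw : ∀ i, 0 < w i) : 0 < Pconv v w :=
  (lt_Pconv_iff v w).mpr fun _ hn => div_pos (tail_pos v hv hn) (tail_pos w hw hn)

theorem Pconv_le_one (v w : ι → ℝ) (hv : IsProbVec v) (hw : IsProbVec w) : Pconv v w ≤ 1 := by
  have h := Pconv_le v w (n := 0) Fintype.card_pos
  have hzero : ∀ z : ι → ℝ, topSum z 0 = 0 := fun z => by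
    obtain ⟨s, hs, h⟩ := exists_topSum_eq_sum z 0
    rw [h, Finset.card_eq_zero.mp (Nat.le_zero.mp hs), Finset.sum_empty]
  simpa [hzero, hv.2, hw.2] using h

/-- The conversion probability is at most the ratio of the smallest entries. -/
theorem Pconv_le_div_of_forall_le (v w : ι → ℝ) (hv : ∀ i, 0 ≤ v i) (hw : ∀ i, 0 < w i) (m : ι)
    (hm : ∀ i, w m ≤ w i) : Pconv v w ≤ v m / w m := by
  have hpos : 0 < Fintype.card ι := Fintype.card_pos
  refine (Pconv_le v w (n := Fintype.card ι - 1) (by omega)).trans ?_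
  refine div_le_div₀ (hv m) ?_ (hw m) ?_
  · simpa using tail_le_sum v (u := {m}) (n := Fintype.card ι - 1) (by simp; omega)
  · obtain ⟨u, hu, h⟩ := exists_tail_eq_sum w (fun i => (hw i).le)
      (show Fintype.card ι - 1 ≤ Fintype.card ι by omega)
    obtain ⟨i, rfl⟩ := Finset.card_eq_one.mp (show u.card = 1 by omega)
    rw [h, Finset.sum_singleton]
    exact hm i

end TopSum

theorem IsProbVec.pvTensor {ι κ : Type*} [Fintype ι] [Fintype κ] {x : ι → ℝ} {c : κ → ℝ}
    (hx : IsProbVec x) (hc : IsProbVec c) : IsProbVec (pvTensor x c) := by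
  refine ⟨fun p => mul_nonneg (hx.1 _) (hc.1 _), ?_⟩
  simp [_root_.pvTensor, Fintype.sum_prod_type, ← Finset.mul_sum, hc.2, hx.2]

section Tensor

variable {ι κ : Type*} [Fintype ι] [DecidableEq ι] [Fintype κ] [DecidableEq κ]

theorem sum_eq_sum_slices {M : Type*} [AddCommMonoid M] (u : Finset (ι × κ)) (f : ι × κ → M) :
    ∑ p ∈ u, f p = ∑ j, ∑ i ∈ Finset.univ.filter (fun i => (i, j) ∈ u), f (i, j) := by
  have h : u = Finset.univ.filter (fun p => p ∈ u) := by simp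
  conv_lhs => rw [h, Finset.sum_filter, Fintype.sum_prod_type_right]
  exact Finset.sum_congr rfl fun j _ => (Finset.sum_filter _ _).symm

theorem sum_pvTensor_eq_sum_slices (u : Finset (ι × κ)) (x : ι → ℝ) (c : κ → ℝ) :
    ∑ p ∈ u, pvTensor x c p =
      ∑ j, (∑ i ∈ Finset.univ.filter (fun i => (i, j) ∈ u), x i) * c j := by
  simp [sum_eq_sum_slices u, pvTensor, Finset.sum_mul]

theorem card_eq_sum_card_slices (u : Finset (ι × κ)) :
    u.card = ∑ j, (Finset.univ.filter (fun i => (i, j) ∈ u)).card := by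
  simp only [Finset.card_eq_sum_ones]
  exact sum_eq_sum_slices u _

/-- For every set `u` there is a set `v` of the same cardinality on which `y` sums to at most
`1 / Pconv x y` times the sum of `x` on `u`. -/
theorem exists_card_eq_Pconv_mul_sum_le [Nonempty ι] (x y : ι → ℝ) (hy : ∀ i, 0 < y i)
    (u : Finset ι) :
    ∃ v : Finset ι, v.card = u.card ∧ Pconv x y * ∑ i ∈ v, y i ≤ ∑ i ∈ u, x i := by
  rcases u.eq_empty_or_nonempty with rfl | hu
  · exact ⟨∅, rfl, by simp⟩
  have hpos := hu.card_pos
  have hle := u.card_le_univ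
  obtain ⟨v, hv, h⟩ := exists_tail_eq_sum y (fun i => (hy i).le)
    (show Fintype.card ι - u.card ≤ Fintype.card ι by omega)
  refine ⟨v, by omega, ?_⟩
  have hlt : Fintype.card ι - u.card < Fintype.card ι := by omega
  rw [← h]
  exact ((le_div_iff₀ (tail_pos y hy hlt)).mp (Pconv_le x y hlt)).trans
    (tail_le_sum x (by omega))

end Tensor

/-- A catalyst whose entries decrease slowly, compared with the gap above the smallest entry of
`y`, but over a range exceeding that of `y`, increases the conversion probability. -/
theorem Pconv_lt_Pconv_pvTensor {d k : ℕ} (x y : Fin (d + 1) → ℝ) (c : Fin (k + 1) → ℝ)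
    (hx : IsProbVec x) (hy : IsProbVec y) (hxa : Antitone x) (hya : Antitone y)
    (hxp : ∀ i, 0 < x i) (hyp : ∀ i, 0 < y i) (hcp : ∀ j, 0 < c j)
    (hone : Pconv x y < 1) (hlast : Pconv x y * y (Fin.last d) < x (Fin.last d))
    (hstep : ∀ i, y (Fin.last d) < y i → ∀ j : Fin k,
      y (Fin.last d) * c j.castSucc < y i * c j.succ)
    (hrange : y 0 * c (Fin.last k) < y (Fin.last d) * c 0) :
    Pconv x y < Pconv (pvTensor x c) (pvTensor y c) := by
  have hP : 0 < Pconv x y := Pconv_pos x y hxp hyp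
  rw [lt_Pconv_iff]
  intro n hn
  have hxc : ∀ p, 0 < pvTensor x c p := fun p => mul_pos (hxp _) (hcp _)
  have hyc : ∀ p, 0 < pvTensor y c p := fun p => mul_pos (hyp _) (hcp _)
  rw [lt_div_iff₀ (tail_pos _ hyc hn)]
  obtain ⟨u, hu, hsum⟩ := exists_tail_eq_sum (pvTensor x c) (fun p => (hxc p).le) hn.le
  rw [hsum]
  by_contra! hle
  let s : Fin (k + 1) → Finset (Fin (d + 1)) :=
    fun j => Finset.univ.filter (fun i => (i, j) ∈ u)
  have hsum_u : ∑ p ∈ u, pvTensor x c p = ∑ j, (∑ i ∈ s j, x i) * c j :=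
    sum_pvTensor_eq_sum_slices u x c
  have hcard_u : u.card = ∑ j, (s j).card := card_eq_sum_card_slices u
  choose t htcard htsum using fun j => exists_card_eq_Pconv_mul_sum_le x y hyp (s j)
  let v : Finset (Fin (d + 1) × Fin (k + 1)) := Finset.univ.filter (fun p => p.1 ∈ t p.2)
  have hmem : ∀ i j, (i, j) ∈ v ↔ i ∈ t j := fun i j => by simp [v]
  have hsum_v : ∑ p ∈ v, pvTensor y c p = ∑ j, (∑ i ∈ t j, y i) * c j := by
    simpa [hmem] using sum_pvTensor_eq_sum_slices v y c
  have hcard_v : v.card = u.card := by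
    rw [hcard_u, card_eq_sum_card_slices v]
    simp [hmem, htcard]
  have hv : Fintype.card (Fin (d + 1) × Fin (k + 1)) ≤ v.card + n := by omega
  have hterm : ∀ j ∈ Finset.univ,
      (Pconv x y * ∑ i ∈ t j, y i) * c j ≤ (∑ i ∈ s j, x i) * c j :=
    fun j _ => mul_le_mul_of_nonneg_right (htsum j) (hcp j).le
  have hsum_vu : Pconv x y * ∑ p ∈ v, pvTensor y c p =
      ∑ j, (Pconv x y * ∑ i ∈ t j, y i) * c j := by
    rw [hsum_v, Finset.mul_sum]
    simp only [mul_assoc]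
  have htail := mul_le_mul_of_nonneg_left (tail_le_sum (pvTensor y c) hv) hP.le
  have hsum_le := Finset.sum_le_sum hterm
  have hswap : ∀ {p q}, p ∈ v → q ∉ v → pvTensor y c p ≤ pvTensor y c q := by
    intro p q
    refine le_of_sum_le_tail _ hv (le_of_mul_le_mul_left ?_ hP)
    linarith
  have heq : ∀ j, Pconv x y * ∑ i ∈ t j, y i = ∑ i ∈ s j, x i := fun j =>
    mul_right_cancel₀ (hcp j).ne' <|
      (Finset.sum_eq_sum_iff_of_le hterm).mp (by linarith) j (Finset.mem_univ j)
  have hexists : ∀ j, (t j).Nonempty → ∃ i ∈ t j, y (Fin.last d) < y i := by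
    intro j hj
    by_contra! h
    have h₁ : ∑ i ∈ t j, y i ≤ (t j).card • y (Fin.last d) :=
      Finset.sum_le_card_nsmul _ _ _ h
    have h₂ : (s j).card • x (Fin.last d) ≤ ∑ i ∈ s j, x i :=
      Finset.card_nsmul_le_sum _ _ _ fun i _ => hxa (Fin.le_last i)
    rw [← htcard, ← heq, nsmul_eq_mul] at h₂
    rw [nsmul_eq_mul] at h₁
    have hpos : (0 : ℝ) < (t j).card := by exact_mod_cast hj.card_pos
    nlinarith [mul_lt_mul_of_pos_left hlast hpos, mul_le_mul_of_nonneg_left h₁ hP.le]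
  have hne_univ : ∀ j, ∃ i, i ∉ t j := by
    intro j
    by_contra! h
    have ht : t j = Finset.univ := Finset.eq_univ_iff_forall.mpr h
    have hs : s j = Finset.univ := by
      rw [← Finset.card_eq_iff_eq_univ, ← htcard, ht, Finset.card_univ]
    have := heq j
    rw [ht, hs, hx.2, hy.2] at this
    linarith
  have hzero : ∀ j, (t j).Nonempty → (t 0).Nonempty := by
    intro j
    induction j using Fin.induction with
    | zero => exact id
    | succ j ih =>
      intro hj
      refine ih ?_
      by_contra hempty
      rw [Finset.not_nonempty_iff_eq_empty] at hempty
      obtain ⟨i, hi, hyi⟩ := hexists _ hj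
      have : y i * c j.succ ≤ y (Fin.last d) * c j.castSucc :=
        hswap (q := (Fin.last d, j.castSucc)) ((hmem _ _).mpr hi) (by simp [hmem, hempty])
      exact (hstep i hyi j).not_ge this
  have hv_pos : v.Nonempty := Finset.card_pos.mp (by omega)
  obtain ⟨⟨i, j⟩, hij⟩ := hv_pos
  obtain ⟨a, ha⟩ := hzero j ⟨i, (hmem _ _).mp hij⟩
  obtain ⟨b, hb⟩ := hne_univ (Fin.last k)
  have hab : y a * c 0 ≤ y b * c (Fin.last k) :=
    hswap ((hmem _ _).mpr ha) (fun h => hb ((hmem _ _).mp h))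
  have ha' := mul_le_mul_of_nonneg_right (hya (Fin.le_last a)) (hcp 0).le
  have hb' := mul_le_mul_of_nonneg_right (hya (Fin.zero_le b)) (hcp (Fin.last k)).le
  linarith

/-- A ratio `α < 1` so close to `1` that multiplying by it keeps every larger entry of `y`
above `m`. -/
theorem exists_ratio_lt_one {ι : Type*} [Finite ι] (y : ι → ℝ) (m : ℝ) :
    ∃ α : ℝ, 0 < α ∧ α < 1 ∧ ∀ i, m < y i → m < y i * α := by
  have h : ∀ᶠ α : ℝ in nhdsWithin 1 (Set.Iio 1), ∀ i, m < y i → m < y i * α := by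
    rw [Filter.eventually_all]
    intro i
    by_cases hi : m < y i
    · have hc : Filter.Tendsto (fun α : ℝ => y i * α) (nhdsWithin 1 (Set.Iio 1))
          (nhds (y i * 1)) :=
        (Continuous.tendsto (by fun_prop) 1).mono_left nhdsWithin_le_nhds
      filter_upwards [hc.eventually_const_lt (by simpa using hi)] with α hα _ using hα
    · exact Filter.Eventually.of_forall fun _ h => absurd h hi
  have hpos : ∀ᶠ α : ℝ in nhdsWithin 1 (Set.Iio 1), 0 < α :=
    nhdsWithin_le_nhds (lt_mem_nhds one_pos)
  obtain ⟨α, hα, hα0, hα1⟩ := (h.and (hpos.and self_mem_nhdsWithin)).exists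
  exact ⟨α, hα0, hα1, hα⟩

/-- Feng–Duan–Ying: there exists a (strictly positive) catalyst `c` strictly increasing
the optimal conversion probability iff `P(x → y) < min{x_{d-1}/y_{d-1}, 1}`. -/
theorem catalyst_enhances_probability_iff {d : ℕ} (x y : Fin (d + 1) → ℝ)
    (hx : IsProbVec x) (hy : IsProbVec y) (hxa : Antitone x) (hya : Antitone y)
    (hxp : ∀ i, 0 < x i) (hyp : ∀ i, 0 < y i) :
    (∃ (k : ℕ) (c : Fin (k + 1) → ℝ), IsProbVec c ∧ (∀ j, 0 < c j) ∧
        Pconv x y < Pconv (pvTensor x c) (pvTensor y c)) ↔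
      Pconv x y < min (x (Fin.last d) / y (Fin.last d)) 1 := by
  constructor
  · rintro ⟨k, c, hc, hcp, hlt⟩
    refine hlt.trans_le (le_min ?_ (Pconv_le_one _ _ (hx.pvTensor hc) (hy.pvTensor hc)))
    obtain ⟨j, hj⟩ := Finite.exists_min c
    have h := Pconv_le_div_of_forall_le (pvTensor x c) (pvTensor y c)
      (hx.pvTensor hc).1 (fun p => mul_pos (hyp _) (hcp _)) (Fin.last d, j)
      (fun p => mul_le_mul (hya (Fin.le_last _)) (hj _) (hcp _).le (hyp _).le)
    simpa only [pvTensor, mul_div_mul_right _ _ (hcp j).ne'] using h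
  · intro h
    obtain ⟨hlast, hone⟩ := lt_min_iff.mp h
    rw [lt_div_iff₀ (hyp _)] at hlast
    obtain ⟨α, hα0, hα1, hα⟩ := exists_ratio_lt_one y (y (Fin.last d))
    obtain ⟨k, hk⟩ := exists_pow_lt_of_lt_one (div_pos (hyp (Fin.last d)) (hyp 0)) hα1
    rw [lt_div_iff₀ (hyp 0)] at hk
    have hS : 0 < ∑ j : Fin (k + 1), α ^ (j : ℕ) :=
      Finset.sum_pos (fun j _ => pow_pos hα0 _) Finset.univ_nonempty
    set S := ∑ j : Fin (k + 1), α ^ (j : ℕ)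
    have hcp : ∀ j : Fin (k + 1), 0 < α ^ (j : ℕ) / S := fun j => div_pos (pow_pos hα0 _) hS
    refine ⟨k, fun j => α ^ (j : ℕ) / S, ⟨fun j => (hcp j).le, ?_⟩, hcp, ?_⟩
    · rw [← Finset.sum_div, div_self hS.ne']
    · refine Pconv_lt_Pconv_pvTensor x y _ hx hy hxa hya hxp hyp hcp hone hlast ?_ ?_
      · intro i hi j
        have := mul_lt_mul_of_pos_right (hα i hi) (hcp j.castSucc)
        simp only [Fin.val_castSucc, Fin.val_succ] at this ⊢
        calc _ < _ := this
          _ = _ := by rw [pow_succ]; ring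
      · simp only [Fin.val_last, Fin.val_zero, pow_zero, ← mul_div_assoc]
        exact div_lt_div_of_pos_right (by linarith) hS
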